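/- Let $p>2$ be a prime, let $k$ be an integer coprime to $2p$, let $\omega=-\tfrac12+\tfrac{\sqrt3}{2}i\in\mathbb H$ (the upper half-plane), and suppose that the vertical line $\{\operatorname{Re} z = k/(2p)\}$ contains a point of the $\mathrm{SL}(2,\mathbb Z)$-orbit of $\omega$, say $\operatorname{Re}(g\cdot\omega)=k/(2p)$ with $g\in \mathrm{SL}(2,\mathbb Z)$. The barycenter of an ideal triangle of $\mathbb H$ with vertices $a,b,c\in\mathbb R\cup\{\infty\}$ is the image of $\omega$ under an isometry of $\mathbb H$ that maps $\{\infty,0,-1\}$ onto $\{a,b,c\}$. The Ford circle at an extended rational $x\in\mathbb Q\cup\{\infty\}$ is the image of $\{\operatorname{Im} z>1\}$ under an element of $\mathrm{SL}(2,\mathbb Z)$ that maps $\infty$ to $x$. The $\lambda$-length of the geodesic joining two distinct extended rationals $x,y$ is $e^{\ell/2}$, where $\ell$ is the hyperbolic length of its part outside the Ford circles at $x$ and $y$. Then: 1. the ideal triangle with vertices $\infty,\ \frac{k-1}{2p},\ \frac{k+1}{2p}$ has a unique barycenter, namely $\frac{k+\sqrt3\,i}{2p}$; 2. this triangle is equilateral,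 with all three sides of $\lambda$-length $p$; 3. either $p\mid k^2+3$ and $g\cdot\omega=\frac{k+\sqrt3\,i}{2p}$, the barycenter of the triangle, or $p\mid 3k^2+1$ and $g\cdot\omega=\frac{3k+\sqrt3\,i}{6p}$; 4. there exist coprime positive integers $c,d$ with $c^2-cd+d^2=p$. -/

import Mathlib

open UpperHalfPlane OnePoint
open scoped MatrixGroups MeasureTheory

/-- The primitive cube root of unity `ω = -1/2 + (√3/2) i` in the upper half-plane. -/
noncomputable def omegaH : ℍ :=
  ⟨⟨-1/2, Real.sqrt 3 / 2⟩, by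
    simp only
    positivity⟩

/-- `z` is a barycenter of the ideal triangle with vertices `a, b, c ∈ ∂ℍ = ℝ ∪ {∞}`: some isometry
of `ℍ` maps the vertices `∞, 0, -1` of the basic ideal triangle onto `{a, b, c}` and `ω` to `z`.
(`GL(2, ℝ)` acts on `ℍ` through the full isometry group, a matrix of negative determinant acting
as an orientation-reversing isometry, and on `∂ℍ` by Möbius transformations.) -/
def IsBarycenter (a b c : OnePoint ℝ) (z : ℍ) : Prop :=
  ∃ h : GL (Fin 2) ℝ,
    (fun x : OnePoint ℝ => h • x) '' {∞, ((0 : ℝ) : OnePoint ℝ), ((-1 : ℝ) : OnePoint ℝ)} = {a, b, c} ∧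
      h • omegaH = z

/-- The (open) Ford circle at an extended rational `x`: the image of the horoball `{Im z > 1}`
under any element of `SL(2, ℤ)` that maps `∞` to `x`. -/
def fordCircle (x : OnePoint ℝ) : Set ℍ :=
  {z | ∃ γ : SL(2, ℤ), Matrix.SpecialLinearGroup.mapGL ℝ γ • (∞ : OnePoint ℝ) = x ∧
    1 < (γ⁻¹ • z).im}

/-- The complete geodesic of `ℍ` with endpoints `x ≠ y` in `∂ℍ`: the image of the imaginary
axis under an isometry that maps `0` to `x` and `∞` to `y`. -/
def geodesicLine (x y : OnePoint ℝ) : Set ℍ :=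
  {z | ∃ h : GL (Fin 2) ℝ, h • ((0 : ℝ) : OnePoint ℝ) = x ∧ h • (∞ : OnePoint ℝ) = y ∧
    (h⁻¹ • z).re = 0}

/-- The hyperbolic length (one-dimensional Hausdorff measure of the Poincaré metric) of the part of
the arc joining the extended rationals `x ≠ y` that lies outside the Ford circles at `x` and `y`. -/
noncomputable def truncatedLength (x y : OnePoint ℝ) : ℝ :=
  (μH[1] (geodesicLine x y \ (fordCircle x ∪ fordCircle y))).toReal

/-- The `λ`-length of the arc joining the extended rationals `x ≠ y`: the exponential of half the
truncated length. -/
noncomputable def lambdaLength (x y : OnePoint ℝ) : ℝ :=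
  Real.exp (truncatedLength x y / 2)

/-- The ideal triangle with vertices `a, b, c` is equilateral with sides of `λ`-length `l`. -/
def IsEquilateral (a b c : OnePoint ℝ) (l : ℝ) : Prop :=
  a ≠ b ∧ b ≠ c ∧ c ≠ a ∧ lambdaLength a b = l ∧ lambdaLength b c = l ∧ lambdaLength c a = l

/-! The isometries permuting `∞, 0, -1` are generated by a rotation of order three and a reflection,
both of which fix `ω`; hence an ideal triangle has at most one barycenter.

For `γ, δ ∈ SL(2, ℤ)` the `λ`-length of the arc from `γ ∞` to `δ ∞` is the absolute value of the
lower left entry `q` of `γ⁻¹ δ`: by invariance this reduces to `γ = 1`, where the truncated arc is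
the vertical segment between the heights `1 / q ^ 2` and `1`.

If `(a, b)` and `(c, d)` are the rows of `g`, then `2 N(c, d) g • ω` has real part `m` and imaginary
part `√3`, where `N(x, y) = x² - xy + y²` and `m` is the value of its polar form on the two rows.
Since `m² + 3 = 4 N(a, b) N(c, d)`, the equation `m / N(c, d) = k / p` with `k` and `p` coprime
leaves only `N(c, d) = p` and `N(c, d) = 3 p`. -/

section Moebius

lemma normSq_denom_eq (h : GL (Fin 2) ℝ) (z : ℍ) :
    Complex.normSq (denom h z) = (h 1 0 * z.re + h 1 1) ^ 2 + (h 1 0 * z.im) ^ 2 := by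
  simp only [denom, Complex.normSq_apply, Complex.add_re, Complex.add_im, Complex.re_ofReal_mul,
    Complex.im_ofReal_mul, Complex.ofReal_re, Complex.ofReal_im, coe_re, coe_im]
  ring

lemma smul_re_eq_div (h : GL (Fin 2) ℝ) (z : ℍ) :
    (h • z).re = ((h 0 0 * z.re + h 0 1) * (h 1 0 * z.re + h 1 1) + h 0 0 * h 1 0 * z.im ^ 2) /
      ((h 1 0 * z.re + h 1 1) ^ 2 + (h 1 0 * z.im) ^ 2) := by
  rw [UpperHalfPlane.re_smul, Complex.div_re, normSq_denom_eq, ← add_div]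
  congr 1
  simp only [num, denom, Complex.add_re, Complex.add_im, Complex.re_ofReal_mul,
    Complex.im_ofReal_mul, Complex.ofReal_re, Complex.ofReal_im, coe_re, coe_im]
  ring

lemma smul_im_eq_div (h : GL (Fin 2) ℝ) (z : ℍ) :
    (h • z).im = |h 0 0 * h 1 1 - h 0 1 * h 1 0| * z.im /
      ((h 1 0 * z.re + h 1 1) ^ 2 + (h 1 0 * z.im) ^ 2) := by
  rw [UpperHalfPlane.im_smul_eq_div_normSq, normSq_denom_eq,
    Matrix.GeneralLinearGroup.val_det_apply, Matrix.det_fin_two]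

lemma coe_eq_add_mul_I_div_iff (z : ℍ) (a b c : ℝ) :
    (z : ℂ) = (a + b * Complex.I) / c ↔ z.re = a / c ∧ z.im = b / c := by
  simp [Complex.ext_iff]

lemma smul_eq_coe_iff {h : GL (Fin 2) ℝ} {y x : ℝ} :
    h • (y : OnePoint ℝ) = x ↔
      h 1 0 * y + h 1 1 ≠ 0 ∧ h 0 0 * y + h 0 1 = x * (h 1 0 * y + h 1 1) := by
  rw [OnePoint.smul_some_eq_ite]
  split_ifs with hden
  · simp [hden]
  · rw [OnePoint.coe_eq_coe, div_eq_iff hden, and_iff_right hden]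

lemma smul_coe_eq_infty_iff {h : GL (Fin 2) ℝ} {y : ℝ} :
    h • (y : OnePoint ℝ) = ∞ ↔ h 1 0 * y + h 1 1 = 0 := by
  simp [OnePoint.smul_some_eq_ite]

lemma smul_infty_eq_coe_iff {h : GL (Fin 2) ℝ} {x : ℝ} :
    h • (∞ : OnePoint ℝ) = x ↔ h 1 0 ≠ 0 ∧ h 0 0 = x * h 1 0 := by
  rw [OnePoint.smul_infty_eq_ite]
  split_ifs with hc
  · simp [hc]
  · rw [OnePoint.coe_eq_coe, div_eq_iff hc, and_iff_right hc]

end Moebius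

section EisensteinNorm

variable {R : Type*} [CommRing R]

/-- The norm `x² - xy + y²` of the Eisenstein integer `x + yω`. -/
def eisensteinNorm (x y : R) : R :=
  x ^ 2 - x * y + y ^ 2

/-- The polar form `N(a + c, b + d) - N(a, b) - N(c, d)` of the norm form `N = eisensteinNorm`,
evaluated at the vectors `(a, b)` and `(c, d)`. -/
def eisensteinPolar (a b c d : R) : R :=
  2 * a * c + 2 * b * d - a * d - b * c

lemma eisensteinPolar_sq_add_three_mul_det_sq (a b c d : R) :
    eisensteinPolar a b c d ^ 2 + 3 * (a * d - b * c) ^ 2 =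
      4 * eisensteinNorm c d * eisensteinNorm a b := by
  unfold eisensteinPolar eisensteinNorm
  ring

lemma eisensteinNorm_pos [LinearOrder R] [IsStrictOrderedRing R] {x y : R}
    (h : x ≠ 0 ∨ y ≠ 0) : 0 < eisensteinNorm x y := by
  unfold eisensteinNorm
  rcases h with h | h
  · nlinarith [sq_pos_of_ne_zero h, sq_nonneg (x - 2 * y)]
  · nlinarith [sq_pos_of_ne_zero h, sq_nonneg (2 * x - y)]

lemma exists_pos_isCoprime_eisensteinNorm_eq {x y : ℤ} (h : IsCoprime x y) :
    ∃ c d : ℤ, 0 < c ∧ 0 < d ∧ IsCoprime c d ∧ eisensteinNorm c d = eisensteinNorm x y := by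
  have of_pos {x y : ℤ} (h : IsCoprime x y) (hy : 0 < y) :
      ∃ c d : ℤ, 0 < c ∧ 0 < d ∧ IsCoprime c d ∧ eisensteinNorm c d = eisensteinNorm x y := by
    rcases lt_or_ge 0 x with hx | hx
    · exact ⟨x, y, hx, hy, h, rfl⟩
    · refine ⟨y - x, y, by linarith, hy, ?_, by unfold eisensteinNorm; ring⟩
      simpa [sub_eq_neg_add] using h.neg_left.add_mul_left_left 1
  rcases lt_trichotomy y 0 with hy | rfl | hy
  · obtain ⟨c, d, hc, hd, hcd, e⟩ := of_pos h.neg_neg (neg_pos.mpr hy)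
    exact ⟨c, d, hc, hd, hcd, e.trans (by unfold eisensteinNorm; ring)⟩
  · refine ⟨1, 1, one_pos, one_pos, isCoprime_one_left, ?_⟩
    rcases Int.isUnit_iff.mp (isCoprime_zero_right.mp h) with rfl | rfl <;> rfl
  · exact of_pos h hy

/-- Division by the prime `1 - ω` of norm `3`. -/
lemma exists_isCoprime_eisensteinNorm_eq_of_eq_three_mul {c d n : ℤ} (hcd : IsCoprime c d)
    (h : eisensteinNorm c d = 3 * n) : ∃ x y : ℤ, IsCoprime x y ∧ eisensteinNorm x y = n := by
  unfold eisensteinNorm at h ⊢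
  obtain ⟨s, hs⟩ : (3 : ℤ) ∣ c + d :=
    Int.prime_three.dvd_of_dvd_pow (n := 2) ⟨n + c * d, by linear_combination h⟩
  obtain rfl : d = 3 * s - c := by linarith
  obtain ⟨u, v, huv⟩ := hcd
  exact ⟨c - s, s, ⟨u - v, u + 2 * v, by linear_combination huv⟩, by linarith⟩

end EisensteinNorm

section OrbitOfOmega

lemma omegaH_re : omegaH.re = -1 / 2 := rfl

lemma omegaH_im : omegaH.im = √3 / 2 := rfl

lemma omegaH_im_sq : omegaH.im ^ 2 = 3 / 4 := by
  rw [omegaH_im, div_pow, Real.sq_sqrt (by norm_num)]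
  norm_num

lemma smul_omegaH_re (h : GL (Fin 2) ℝ) :
    (h • omegaH).re = eisensteinPolar (h 0 0) (h 0 1) (h 1 0) (h 1 1) /
      (2 * eisensteinNorm (h 1 0) (h 1 1)) := by
  rw [smul_re_eq_div, mul_pow, omegaH_im_sq, omegaH_re, ← mul_div_mul_left _ _ (two_ne_zero' ℝ)]
  unfold eisensteinPolar eisensteinNorm
  congr 1 <;> ring

lemma smul_omegaH_im (h : GL (Fin 2) ℝ) :
    (h • omegaH).im = |h 0 0 * h 1 1 - h 0 1 * h 1 0| * √3 /
      (2 * eisensteinNorm (h 1 0) (h 1 1)) := by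
  rw [smul_im_eq_div, mul_pow, omegaH_im_sq, omegaH_im, omegaH_re,
    ← mul_div_mul_left _ _ (two_ne_zero' ℝ)]
  unfold eisensteinNorm
  congr 1 <;> ring

lemma modular_smul_omegaH_re (g : SL(2, ℤ)) :
    (g • omegaH).re = (eisensteinPolar (g 0 0) (g 0 1) (g 1 0) (g 1 1) : ℤ) /
      (2 * (eisensteinNorm (g 1 0) (g 1 1) : ℤ)) := by
  rw [ModularGroup.sl_moeb, smul_omegaH_re]
  simp [eisensteinPolar, eisensteinNorm]

lemma modular_smul_omegaH_im (g : SL(2, ℤ)) :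
    (g • omegaH).im = √3 / (2 * (eisensteinNorm (g 1 0) (g 1 1) : ℤ)) := by
  have hdet : (g 0 0 : ℝ) * g 1 1 - g 0 1 * g 1 0 = 1 := by
    exact_mod_cast (Matrix.det_fin_two _).symm.trans g.det_coe
  rw [ModularGroup.sl_moeb, smul_omegaH_im]
  simp [eisensteinNorm, hdet]

lemma four_mul_dvd_and_eq_or_eq_three_mul {k p m n n' : ℤ} (hp : 0 < p) (hn : 0 < n)
    (hk : IsCoprime k p) (hmn : m * p = k * n) (hnorm : m ^ 2 + 3 = 4 * n * n') :
    (4 * p ∣ k ^ 2 + 3 ∧ n = p) ∨ (4 * p ∣ 3 * k ^ 2 + 1 ∧ n = 3 * p) := by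
  obtain ⟨e, rfl⟩ : p ∣ n := hk.symm.dvd_of_dvd_mul_left ⟨m, by linarith⟩
  obtain rfl : m = k * e := mul_right_cancel₀ hp.ne' (by linarith)
  have he : 0 < e := pos_of_mul_pos_right hn hp.le
  have he3 : e ∣ 3 := ⟨4 * p * n' - k ^ 2 * e, by linear_combination hnorm⟩
  rcases (Nat.dvd_prime Nat.prime_three).mp (Int.natAbs_dvd_natAbs.mpr he3) with h | h
  · obtain rfl : e = 1 := by omega
    exact .inl ⟨⟨n', by linear_combination hnorm⟩, by ring⟩
  · obtain rfl : e = 3 := by omega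
    exact .inr ⟨⟨n', by linarith⟩, by ring⟩

theorem eisensteinNorm_eq_or_of_smul_omegaH_re_eq {p : ℤ} (hp : 0 < p) {k : ℤ}
    (hk : IsCoprime k p) (g : SL(2, ℤ)) (hre : (g • omegaH).re = (k : ℝ) / (2 * p)) :
    (4 * p ∣ k ^ 2 + 3 ∧ eisensteinNorm (g 1 0) (g 1 1) = p) ∨
      (4 * p ∣ 3 * k ^ 2 + 1 ∧ eisensteinNorm (g 1 0) (g 1 1) = 3 * p) := by
  have hN : 0 < eisensteinNorm (g 1 0) (g 1 1) :=
    eisensteinNorm_pos (ModularGroup.bottom_row_coprime g).ne_zero_or_ne_zero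
  have hdet : g 0 0 * g 1 1 - g 0 1 * g 1 0 = 1 := (Matrix.det_fin_two _).symm.trans g.det_coe
  have hNR : (0 : ℝ) < (eisensteinNorm (g 1 0) (g 1 1) : ℤ) := by exact_mod_cast hN
  have hpR : (0 : ℝ) < p := by exact_mod_cast hp
  refine four_mul_dvd_and_eq_or_eq_three_mul hp hN hk
    (m := eisensteinPolar (g 0 0) (g 0 1) (g 1 0) (g 1 1))
    (n' := eisensteinNorm (g 0 0) (g 0 1)) ?_ ?_
  · rw [modular_smul_omegaH_re, div_eq_div_iff (by positivity) (by positivity)] at hre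
    have : (eisensteinPolar (g 0 0) (g 0 1) (g 1 0) (g 1 1) : ℤ) * (p : ℝ) =
        k * (eisensteinNorm (g 1 0) (g 1 1) : ℤ) := by linarith
    exact_mod_cast this
  · rw [← eisensteinPolar_sq_add_three_mul_det_sq, hdet, one_pow, mul_one]

theorem dvd_and_smul_omegaH_eq_or {p : ℤ} (hp : 0 < p) {k : ℤ} (hk : IsCoprime k p)
    (g : SL(2, ℤ)) (hre : (g • omegaH).re = (k : ℝ) / (2 * p)) :
    (p ∣ k ^ 2 + 3 ∧ ((g • omegaH : ℍ) : ℂ) = (k + √3 * Complex.I) / (2 * p)) ∨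
      (p ∣ 3 * k ^ 2 + 1 ∧ ((g • omegaH : ℍ) : ℂ) = (3 * k + √3 * Complex.I) / (6 * p)) := by
  rcases eisensteinNorm_eq_or_of_smul_omegaH_re_eq hp hk g hre with ⟨hdvd, hN⟩ | ⟨hdvd, hN⟩
  · refine .inl ⟨dvd_of_mul_left_dvd hdvd, ?_⟩
    have him : (g • omegaH).im = √3 / (2 * p) := by rw [modular_smul_omegaH_im, hN]
    exact_mod_cast (coe_eq_add_mul_I_div_iff _ k √3 (2 * p)).mpr ⟨hre, him⟩
  · refine .inr ⟨dvd_of_mul_left_dvd hdvd, ?_⟩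
    have hre' : (g • omegaH).re = 3 * k / (6 * p) := by
      rw [hre, ← mul_div_mul_left _ _ (three_ne_zero' ℝ)]
      ring
    have him : (g • omegaH).im = √3 / (6 * p) := by
      rw [modular_smul_omegaH_im, hN]
      push_cast
      ring
    exact_mod_cast (coe_eq_add_mul_I_div_iff _ (3 * k) √3 (6 * p)).mpr ⟨hre', him⟩

lemma exists_eq_two_mul_add_one_and_isCoprime {k p : ℤ}
    (h : 4 * p ∣ k ^ 2 + 3 ∨ 4 * p ∣ 3 * k ^ 2 + 1) :
    ∃ r, k = 2 * r + 1 ∧ IsCoprime (r * (r + 1)) p := by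
  obtain ⟨r, rfl | rfl⟩ := Int.even_or_odd' k
  · rcases h with ⟨w, hw⟩ | ⟨w, hw⟩
    · have : 4 * (p * w - r ^ 2) = 3 := by linear_combination -hw
      omega
    · have : 4 * (p * w - 3 * r ^ 2) = 1 := by linear_combination -hw
      omega
  · refine ⟨r, rfl, ?_⟩
    rcases h with ⟨w, hw⟩ | ⟨w, hw⟩
    · exact ⟨-1, w, by linarith⟩
    · exact ⟨-3, w, by linarith⟩

end OrbitOfOmega

section Barycenter

open scoped Pointwise

/-- The vertices `∞, 0, -1` of the basic ideal triangle, whose barycenter is `ω`. -/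
def baseVertices : Set (OnePoint ℝ) :=
  {∞, ((0 : ℝ) : OnePoint ℝ), ((-1 : ℝ) : OnePoint ℝ)}

/-- The isometry `z ↦ -1 / (z + 1)`, which permutes the base vertices cyclically,
`∞ ↦ 0 ↦ -1 ↦ ∞`. -/
noncomputable def baseRotation : GL (Fin 2) ℝ :=
  .mkOfDetNeZero !![0, 1; -1, -1] (by simp)

/-- The isometry `z ↦ -1 - z̄`, which fixes the base vertex `∞` and exchanges `0` and `-1`. -/
noncomputable def baseReflection : GL (Fin 2) ℝ :=
  .mkOfDetNeZero !![1, 1; 0, -1] (by simp)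

lemma baseRotation_smul_zero :
    baseRotation • ((0 : ℝ) : OnePoint ℝ) = ((-1 : ℝ) : OnePoint ℝ) := by
  simp [smul_eq_coe_iff, baseRotation, Matrix.GeneralLinearGroup.mkOfDetNeZero]

lemma baseRotation_smul_neg_one : baseRotation • ((-1 : ℝ) : OnePoint ℝ) = ∞ := by
  simp [smul_coe_eq_infty_iff, baseRotation, Matrix.GeneralLinearGroup.mkOfDetNeZero]

lemma baseRotation_smul_infty : baseRotation • (∞ : OnePoint ℝ) = ((0 : ℝ) : OnePoint ℝ) := by
  simp [smul_infty_eq_coe_iff, baseRotation, Matrix.GeneralLinearGroup.mkOfDetNeZero]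

lemma baseReflection_smul_zero :
    baseReflection • ((0 : ℝ) : OnePoint ℝ) = ((-1 : ℝ) : OnePoint ℝ) := by
  simp [smul_eq_coe_iff, baseReflection, Matrix.GeneralLinearGroup.mkOfDetNeZero]

lemma baseReflection_smul_neg_one :
    baseReflection • ((-1 : ℝ) : OnePoint ℝ) = ((0 : ℝ) : OnePoint ℝ) := by
  simp [smul_eq_coe_iff, baseReflection, Matrix.GeneralLinearGroup.mkOfDetNeZero]

lemma baseReflection_smul_infty : baseReflection • (∞ : OnePoint ℝ) = ∞ := by
  simp [OnePoint.smul_infty_eq_self_iff, baseReflection, Matrix.GeneralLinearGroup.mkOfDetNeZero]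

lemma baseRotation_mem_stabilizer_baseVertices :
    baseRotation ∈ MulAction.stabilizer (GL (Fin 2) ℝ) baseVertices := by
  rw [MulAction.mem_stabilizer_iff, baseVertices, Set.smul_set_insert, Set.smul_set_insert,
    Set.smul_set_singleton, baseRotation_smul_infty, baseRotation_smul_zero,
    baseRotation_smul_neg_one]
  ext x
  simp only [Set.mem_insert_iff, Set.mem_singleton_iff]
  tauto

lemma baseReflection_mem_stabilizer_baseVertices :
    baseReflection ∈ MulAction.stabilizer (GL (Fin 2) ℝ) baseVertices := by
  rw [MulAction.mem_stabilizer_iff, baseVertices, Set.smul_set_insert, Set.smul_set_insert,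
    Set.smul_set_singleton, baseReflection_smul_infty, baseReflection_smul_zero,
    baseReflection_smul_neg_one, Set.pair_comm]

lemma baseRotation_mem_stabilizer_omegaH :
    baseRotation ∈ MulAction.stabilizer (GL (Fin 2) ℝ) omegaH := by
  refine UpperHalfPlane.ext_re_im ?_ ?_
  · rw [smul_omegaH_re, omegaH_re]
    norm_num [baseRotation, Matrix.GeneralLinearGroup.mkOfDetNeZero, eisensteinPolar,
      eisensteinNorm]
  · rw [smul_omegaH_im, omegaH_im]
    simp [baseRotation, Matrix.GeneralLinearGroup.mkOfDetNeZero, eisensteinNorm]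

lemma baseReflection_mem_stabilizer_omegaH :
    baseReflection ∈ MulAction.stabilizer (GL (Fin 2) ℝ) omegaH := by
  refine UpperHalfPlane.ext_re_im ?_ ?_
  · rw [smul_omegaH_re, omegaH_re]
    norm_num [baseReflection, Matrix.GeneralLinearGroup.mkOfDetNeZero, eisensteinPolar,
      eisensteinNorm]
  · rw [smul_omegaH_im, omegaH_im]
    simp [baseReflection, Matrix.GeneralLinearGroup.mkOfDetNeZero, eisensteinNorm]

lemma smul_eq_self_of_forall_mem_baseVertices {h : GL (Fin 2) ℝ}
    (hfix : ∀ x ∈ baseVertices, h • x = x) (z : ℍ) : h • z = z := by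
  have hc : h 1 0 = 0 := OnePoint.smul_infty_eq_self_iff.mp (hfix _ (by simp [baseVertices]))
  obtain ⟨hd, hb⟩ := smul_eq_coe_iff.mp (hfix ((0 : ℝ) : OnePoint ℝ) (by simp [baseVertices]))
  obtain ⟨-, ha⟩ := smul_eq_coe_iff.mp (hfix ((-1 : ℝ) : OnePoint ℝ) (by simp [baseVertices]))
  replace hd : h 1 1 ≠ 0 := by simpa [hc] using hd
  replace hb : h 0 1 = 0 := by simpa using hb
  replace ha : h 0 0 = h 1 1 := by simpa [hb, hc] using ha
  refine UpperHalfPlane.ext_re_im ?_ ?_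
  · rw [smul_re_eq_div, ha, hb, hc]
    field_simp
    ring
  · rw [smul_im_eq_div, ha, hb, hc, mul_zero, sub_zero, abs_mul_self]
    field_simp
    ring

lemma smul_mem_baseVertices {h : GL (Fin 2) ℝ}
    (hS : h ∈ MulAction.stabilizer (GL (Fin 2) ℝ) baseVertices) {x : OnePoint ℝ}
    (hx : x ∈ baseVertices) : h • x ∈ baseVertices :=
  (MulAction.mem_stabilizer_iff.mp hS).subset (Set.smul_mem_smul_set hx)

lemma mem_stabilizer_omegaH_of_smul_infty_of_smul_zero {h : GL (Fin 2) ℝ}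
    (hS : h ∈ MulAction.stabilizer (GL (Fin 2) ℝ) baseVertices)
    (hinf : h • (∞ : OnePoint ℝ) = ∞)
    (h0 : h • ((0 : ℝ) : OnePoint ℝ) = ((0 : ℝ) : OnePoint ℝ)) :
    h ∈ MulAction.stabilizer (GL (Fin 2) ℝ) omegaH := by
  have hneg : h • ((-1 : ℝ) : OnePoint ℝ) = ((-1 : ℝ) : OnePoint ℝ) := by
    rcases smul_mem_baseVertices hS (x := ((-1 : ℝ) : OnePoint ℝ)) (by simp [baseVertices])
      with e | e | e
    · exact absurd (MulAction.injective h (e.trans hinf.symm)) (OnePoint.coe_ne_infty _)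
    · have := OnePoint.coe_eq_coe.mp (MulAction.injective h (e.trans h0.symm))
      norm_num at this
    · exact e
  refine smul_eq_self_of_forall_mem_baseVertices ?_ omegaH
  rintro x (rfl | rfl | rfl) <;> assumption

lemma mem_stabilizer_omegaH_of_smul_infty {h : GL (Fin 2) ℝ}
    (hS : h ∈ MulAction.stabilizer (GL (Fin 2) ℝ) baseVertices)
    (hinf : h • (∞ : OnePoint ℝ) = ∞) : h ∈ MulAction.stabilizer (GL (Fin 2) ℝ) omegaH := by
  rcases smul_mem_baseVertices hS (x := ((0 : ℝ) : OnePoint ℝ)) (by simp [baseVertices])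
    with e | e | e
  · exact absurd (MulAction.injective h (e.trans hinf.symm)) (OnePoint.coe_ne_infty _)
  · exact mem_stabilizer_omegaH_of_smul_infty_of_smul_zero hS hinf e
  · rw [← Subgroup.mul_mem_cancel_left _ baseReflection_mem_stabilizer_omegaH]
    refine mem_stabilizer_omegaH_of_smul_infty_of_smul_zero
      (mul_mem baseReflection_mem_stabilizer_baseVertices hS) ?_ ?_
    · rw [mul_smul, hinf, baseReflection_smul_infty]
    · rw [mul_smul, e, baseReflection_smul_neg_one]

theorem stabilizer_baseVertices_le_stabilizer_omegaH :
    MulAction.stabilizer (GL (Fin 2) ℝ) baseVertices ≤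
      MulAction.stabilizer (GL (Fin 2) ℝ) omegaH := by
  intro h hS
  have hS' := mul_mem baseRotation_mem_stabilizer_baseVertices hS
  rcases smul_mem_baseVertices hS (x := ∞) (by simp [baseVertices]) with e | e | e
  · exact mem_stabilizer_omegaH_of_smul_infty hS e
  · rw [← Subgroup.mul_mem_cancel_left _ baseRotation_mem_stabilizer_omegaH,
      ← Subgroup.mul_mem_cancel_left _ baseRotation_mem_stabilizer_omegaH]
    refine mem_stabilizer_omegaH_of_smul_infty
      (mul_mem baseRotation_mem_stabilizer_baseVertices hS') ?_
    rw [mul_smul, mul_smul, e, baseRotation_smul_zero, baseRotation_smul_neg_one]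
  · rw [← Subgroup.mul_mem_cancel_left _ baseRotation_mem_stabilizer_omegaH]
    refine mem_stabilizer_omegaH_of_smul_infty hS' ?_
    rw [mul_smul, e, baseRotation_smul_neg_one]

theorem IsBarycenter.unique {a b c : OnePoint ℝ} {z w : ℍ} (hz : IsBarycenter a b c z)
    (hw : IsBarycenter a b c w) : z = w := by
  obtain ⟨h, hS, rfl⟩ := hz
  obtain ⟨f, fS, rfl⟩ := hw
  have hmem : f⁻¹ * h ∈ MulAction.stabilizer (GL (Fin 2) ℝ) baseVertices := by
    rw [MulAction.mem_stabilizer_iff, mul_smul, inv_smul_eq_iff]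
    exact hS.trans fS.symm
  have hfix : (f⁻¹ * h) • omegaH = omegaH := stabilizer_baseVertices_le_stabilizer_omegaH hmem
  rwa [mul_smul, inv_smul_eq_iff] at hfix

lemma exists_isBarycenter_infty_coe_coe {u v : ℝ} (huv : u ≠ v) :
    ∃ z, IsBarycenter ∞ (u : OnePoint ℝ) (v : OnePoint ℝ) z ∧
      z.re = (u + v) / 2 ∧ z.im = √3 / 2 * |v - u| := by
  let h : GL (Fin 2) ℝ :=
    .mkOfDetNeZero !![v - u, v; 0, 1] (by simpa [sub_eq_zero] using huv.symm)
  refine ⟨h • omegaH, ⟨h, ?_, rfl⟩, ?_, ?_⟩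
  · rw [Set.image_insert_eq, Set.image_pair, Set.pair_comm (u : OnePoint ℝ)]
    simp [OnePoint.smul_infty_eq_ite, OnePoint.smul_some_eq_ite, h,
      Matrix.GeneralLinearGroup.mkOfDetNeZero]
  · rw [smul_omegaH_re]
    change eisensteinPolar (v - u) v 0 1 / (2 * eisensteinNorm 0 1) = _
    unfold eisensteinPolar eisensteinNorm
    ring
  · rw [smul_omegaH_im]
    change |(v - u) * 1 - v * 0| * √3 / (2 * eisensteinNorm 0 1) = _
    rw [mul_one, mul_zero, sub_zero]
    unfold eisensteinNorm
    ring

theorem isBarycenter_infty_coe_coe_iff {u v : ℝ} (huv : u ≠ v) (z : ℍ) :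
    IsBarycenter ∞ (u : OnePoint ℝ) (v : OnePoint ℝ) z ↔
      z.re = (u + v) / 2 ∧ z.im = √3 / 2 * |v - u| := by
  obtain ⟨w, hw, hre, him⟩ := exists_isBarycenter_infty_coe_coe huv
  constructor
  · intro hz
    rw [hz.unique hw]
    exact ⟨hre, him⟩
  · rintro ⟨hzre, hzim⟩
    rwa [UpperHalfPlane.ext_re_im (hzre.trans hre.symm) (hzim.trans him.symm)]

theorem isBarycenter_infty_sub_one_div_add_one_div_iff (x : ℝ) {n : ℝ} (hn : 0 < n) (z : ℍ) :
    IsBarycenter ∞ (((x - 1) / n : ℝ) : OnePoint ℝ) (((x + 1) / n : ℝ) : OnePoint ℝ) z ↔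
      (z : ℂ) = (x + √3 * Complex.I) / n := by
  have hmid : ((x - 1) / n + (x + 1) / n) / 2 = x / n := by ring
  have hwidth : (x + 1) / n - (x - 1) / n = 2 / n := by ring
  have hne : (x - 1) / n ≠ (x + 1) / n := fun h => by
    rw [h, sub_self] at hwidth
    exact (div_pos two_pos hn).ne hwidth
  rw [isBarycenter_infty_coe_coe_iff hne, coe_eq_add_mul_I_div_iff, hmid, hwidth,
    abs_of_pos (div_pos two_pos hn), div_mul_div_cancel₀ two_ne_zero]

end Barycenter

section LambdaLength

open Matrix.SpecialLinearGroup (mapGL)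
open scoped Pointwise

instance : IsIsometricSMul SL(2, ℤ) ℍ :=
  ⟨fun γ => isometry_smul ℍ (γ.map (Int.castRingHom ℝ) : SL(2, ℝ))⟩

lemma fordCircle_smul (γ : SL(2, ℤ)) (x : OnePoint ℝ) :
    fordCircle (mapGL ℝ γ • x) = γ • fordCircle x := by
  ext z
  rw [Set.mem_smul_set_iff_inv_smul_mem]
  constructor
  · rintro ⟨δ, hδ, hz⟩
    refine ⟨γ⁻¹ * δ, by rw [map_mul, mul_smul, hδ, map_inv, inv_smul_smul], ?_⟩
    rwa [mul_inv_rev, inv_inv, mul_smul, smul_inv_smul]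
  · rintro ⟨δ, hδ, hz⟩
    refine ⟨γ * δ, by rw [map_mul, mul_smul, hδ], ?_⟩
    rwa [mul_inv_rev, mul_smul]

lemma geodesicLine_smul (f : GL (Fin 2) ℝ) (x y : OnePoint ℝ) :
    geodesicLine (f • x) (f • y) = f • geodesicLine x y := by
  ext z
  rw [Set.mem_smul_set_iff_inv_smul_mem]
  constructor
  · rintro ⟨h, hx, hy, hz⟩
    refine ⟨f⁻¹ * h, by rw [mul_smul, hx, inv_smul_smul], by rw [mul_smul, hy, inv_smul_smul], ?_⟩
    rwa [mul_inv_rev, inv_inv, mul_smul, smul_inv_smul]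
  · rintro ⟨h, hx, hy, hz⟩
    refine ⟨f * h, by rw [mul_smul, hx], by rw [mul_smul, hy], ?_⟩
    rwa [mul_inv_rev, mul_smul]

theorem lambdaLength_smul (γ : SL(2, ℤ)) (x y : OnePoint ℝ) :
    lambdaLength (mapGL ℝ γ • x) (mapGL ℝ γ • y) = lambdaLength x y := by
  have hgeo : geodesicLine (mapGL ℝ γ • x) (mapGL ℝ γ • y) = γ • geodesicLine x y :=
    geodesicLine_smul _ x y
  rw [lambdaLength, truncatedLength, fordCircle_smul, fordCircle_smul, hgeo, ← Set.smul_set_union,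
    ← Set.smul_set_sdiff, MeasureTheory.hausdorffMeasure_smul γ (.inl zero_le_one), lambdaLength,
    truncatedLength]

lemma geodesicLine_infty_coe (x : ℝ) : geodesicLine ∞ (x : OnePoint ℝ) = {z | z.re = x} := by
  ext z
  constructor
  · rintro ⟨h, h0, hinf, hz⟩
    obtain ⟨w, rfl⟩ : ∃ w, z = h • w := ⟨h⁻¹ • z, by simp⟩
    rw [inv_smul_smul] at hz
    have hd : h 1 1 = 0 := by simpa using smul_coe_eq_infty_iff.mp h0
    obtain ⟨hc, ha⟩ := smul_infty_eq_coe_iff.mp hinf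
    have := w.im_pos.ne'
    rw [Set.mem_ofPred_eq, smul_re_eq_div, hz, hd, ha]
    field_simp
    ring
  · intro (hz : z.re = x)
    let f : GL (Fin 2) ℝ := .mkOfDetNeZero !![0, 1; 1, -x] (by simp)
    refine ⟨f⁻¹, ?_, ?_, ?_⟩
    · rw [inv_smul_eq_iff]
      simp [OnePoint.smul_infty_eq_ite, f, Matrix.GeneralLinearGroup.mkOfDetNeZero]
    · rw [inv_smul_eq_iff]
      simp [OnePoint.smul_some_eq_ite, f, Matrix.GeneralLinearGroup.mkOfDetNeZero]
    · rw [inv_inv, smul_re_eq_div, hz]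
      simp [f, Matrix.GeneralLinearGroup.mkOfDetNeZero]

lemma modular_inv_smul_im (γ : SL(2, ℤ)) (z : ℍ) :
    (γ⁻¹ • z).im = z.im / ((γ 0 0 - γ 1 0 * z.re) ^ 2 + (γ 1 0 * z.im) ^ 2) := by
  have hc : γ⁻¹ 1 0 = -γ 1 0 := by rw [Matrix.SpecialLinearGroup.SL2_inv_expl]; rfl
  have hd : γ⁻¹ 1 1 = γ 0 0 := by rw [Matrix.SpecialLinearGroup.SL2_inv_expl]; rfl
  rw [ModularGroup.im_smul_eq_div_normSq, normSq_denom_eq]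
  simp only [Matrix.SpecialLinearGroup.coe_GL_coe_matrix,
    Matrix.SpecialLinearGroup.map_apply_coe, RingHom.mapMatrix_apply, Matrix.map_apply,
    Int.coe_castRingHom, hc, hd, Int.cast_neg]
  ring

lemma fordCircle_infty : fordCircle ∞ = {z | 1 < z.im} := by
  ext z
  refine ⟨?_, fun hz => ⟨1, by simp, by simpa using hz⟩⟩
  rintro ⟨γ, hγ, hz⟩
  have hc : γ 1 0 = 0 := by simpa [OnePoint.smul_infty_eq_self_iff] using hγ
  have ha : (γ 0 0 : ℝ) ^ 2 = 1 := by
    have hcop := γ.isCoprime_col 0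
    rw [hc, isCoprime_zero_right] at hcop
    exact_mod_cast Int.isUnit_sq hcop
  rw [modular_inv_smul_im, hc] at hz
  simpa [ha] using hz

lemma mem_fordCircle_smul_infty_iff_of_re_eq {γ : SL(2, ℤ)} (h : γ 1 0 ≠ 0) {z : ℍ}
    (hz : z.re = γ 0 0 / γ 1 0) :
    z ∈ fordCircle (mapGL ℝ γ • (∞ : OnePoint ℝ)) ↔ z.im < ((γ 1 0 : ℝ) ^ 2)⁻¹ := by
  have hc : (γ 1 0 : ℝ) ≠ 0 := by exact_mod_cast h
  have him := z.im_pos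
  have hinv : (γ⁻¹ • z).im = ((γ 1 0 : ℝ) ^ 2)⁻¹ / z.im := by
    rw [modular_inv_smul_im, hz, mul_div_cancel₀ _ hc]
    field_simp
    ring
  rw [fordCircle_smul, fordCircle_infty, Set.mem_smul_set_iff_inv_smul_mem, Set.mem_ofPred_eq,
    hinv, one_lt_div him]

lemma hausdorffMeasure_verticalSegment (x : ℝ) {a b : ℝ} (ha : 0 < a) (hb : 0 < b) :
    μH[1] {z : ℍ | z.re = x ∧ z.im ∈ Set.Icc a b} = ENNReal.ofReal (Real.log b - Real.log a) := by
  have himage : {z : ℍ | z.re = x ∧ z.im ∈ Set.Icc a b} =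
      (fun y => UpperHalfPlane.mk ⟨x, Real.exp y⟩ (Real.exp_pos y)) ''
        Set.Icc (Real.log a) (Real.log b) := by
    ext z
    constructor
    · rintro ⟨hx, haz, hzb⟩
      exact ⟨Real.log z.im, ⟨Real.log_le_log ha haz, Real.log_le_log z.im_pos hzb⟩,
        UpperHalfPlane.ext_re_im hx.symm (Real.exp_log z.im_pos)⟩
    · rintro ⟨y, ⟨hay, hyb⟩, rfl⟩
      exact ⟨rfl, (Real.log_le_iff_le_exp ha).mp hay, (Real.le_log_iff_exp_le hb).mp hyb⟩
  rw [himage, (isometry_vertical_line x).hausdorffMeasure_image (.inl zero_le_one),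
    MeasureTheory.hausdorffMeasure_real, Real.volume_Icc]

lemma mapGL_smul_infty {γ : SL(2, ℤ)} (h : γ 1 0 ≠ 0) :
    mapGL ℝ γ • (∞ : OnePoint ℝ) = ((γ 0 0 / γ 1 0 : ℝ) : OnePoint ℝ) := by
  simp [OnePoint.smul_infty_eq_ite, h]

lemma geodesicLine_sdiff_fordCircles {γ : SL(2, ℤ)} (h : γ 1 0 ≠ 0) :
    geodesicLine ∞ (mapGL ℝ γ • ∞) \ (fordCircle ∞ ∪ fordCircle (mapGL ℝ γ • ∞)) =
      {z : ℍ | z.re = γ 0 0 / γ 1 0 ∧ z.im ∈ Set.Icc ((γ 1 0 : ℝ) ^ 2)⁻¹ 1} := by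
  ext z
  have hgeo : z ∈ geodesicLine ∞ (mapGL ℝ γ • ∞) ↔ z.re = γ 0 0 / γ 1 0 := by
    rw [mapGL_smul_infty h, geodesicLine_infty_coe, Set.mem_ofPred_eq]
  rw [Set.mem_sdiff, hgeo]
  refine and_congr_right fun hz => ?_
  rw [Set.mem_union, not_or, mem_fordCircle_smul_infty_iff_of_re_eq h hz, fordCircle_infty,
    Set.mem_ofPred_eq, not_lt, not_lt, Set.mem_Icc, and_comm]

lemma truncatedLength_infty_smul_infty {γ : SL(2, ℤ)} (h : γ 1 0 ≠ 0) :
    truncatedLength ∞ (mapGL ℝ γ • ∞) = 2 * Real.log |(γ 1 0 : ℝ)| := by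
  have hc : (1 : ℝ) ≤ |(γ 1 0 : ℝ)| := by exact_mod_cast Int.one_le_abs h
  have hsq : (0 : ℝ) < (γ 1 0 : ℝ) ^ 2 := by positivity
  rw [truncatedLength, geodesicLine_sdiff_fordCircles h,
    hausdorffMeasure_verticalSegment _ (inv_pos.mpr hsq) one_pos, Real.log_one, Real.log_inv,
    zero_sub, neg_neg, Real.log_pow, Nat.cast_ofNat, ← Real.log_abs,
    ENNReal.toReal_ofReal (mul_nonneg zero_le_two (Real.log_nonneg hc))]

lemma lambdaLength_infty_smul_infty {γ : SL(2, ℤ)} (h : γ 1 0 ≠ 0) :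
    lambdaLength ∞ (mapGL ℝ γ • ∞) = |(γ 1 0 : ℝ)| := by
  rw [lambdaLength, truncatedLength_infty_smul_infty h, mul_div_cancel_left₀ _ two_ne_zero,
    Real.exp_log (by positivity)]

theorem lambdaLength_smul_infty_smul_infty {γ δ : SL(2, ℤ)}
    (h : γ 0 0 * δ 1 0 - γ 1 0 * δ 0 0 ≠ 0) :
    lambdaLength (mapGL ℝ γ • ∞) (mapGL ℝ δ • ∞) =
      |((γ 0 0 * δ 1 0 - γ 1 0 * δ 0 0 : ℤ) : ℝ)| := by
  have hentry : (γ⁻¹ * δ) 1 0 = γ 0 0 * δ 1 0 - γ 1 0 * δ 0 0 := by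
    rw [Matrix.SpecialLinearGroup.coe_mul, Matrix.SpecialLinearGroup.coe_inv,
      Matrix.adjugate_fin_two, Matrix.mul_apply, Fin.sum_univ_two]
    change -γ 1 0 * δ 0 0 + γ 0 0 * δ 1 0 = _
    ring
  have hδ : mapGL ℝ δ • (∞ : OnePoint ℝ) = mapGL ℝ γ • mapGL ℝ (γ⁻¹ * δ) • ∞ := by
    rw [← mul_smul, ← map_mul, mul_inv_cancel_left]
  rw [hδ, lambdaLength_smul, lambdaLength_infty_smul_infty (hentry ▸ h), hentry]

theorem isEquilateral_infty_coe_coe {r q : ℤ} (hq : 0 < q) (hr : IsCoprime r q)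
    (hr' : IsCoprime (r + 1) q) :
    IsEquilateral ∞ ((r / q : ℝ) : OnePoint ℝ) (((r + 1) / q : ℝ) : OnePoint ℝ) q := by
  have hqR : (0 : ℝ) < q := by exact_mod_cast hq
  obtain ⟨γ, hγ0, hγ1⟩ := hr.exists_SL2_col 0
  obtain ⟨δ, hδ0, hδ1⟩ := hr'.exists_SL2_col 0
  have hγ := mapGL_smul_infty (hγ1 ▸ hq.ne')
  have hδ := mapGL_smul_infty (hδ1 ▸ hq.ne')
  rw [hγ0, hγ1] at hγ
  rw [hδ0, hδ1, Int.cast_add, Int.cast_one] at hδ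
  refine ⟨OnePoint.infty_ne_coe _, ?_, OnePoint.coe_ne_infty _, ?_, ?_, ?_⟩
  · rw [Ne, OnePoint.coe_eq_coe, div_left_inj' hqR.ne']
    exact (lt_add_one _).ne
  · rw [← hγ, lambdaLength_infty_smul_infty (hγ1 ▸ hq.ne'), hγ1, abs_of_pos hqR]
  · have hdet : γ 0 0 * δ 1 0 - γ 1 0 * δ 0 0 = -q := by rw [hγ0, hγ1, hδ0, hδ1]; ring
    rw [← hγ, ← hδ, lambdaLength_smul_infty_smul_infty (by omega), hdet, Int.cast_neg, abs_neg,
      abs_of_pos hqR]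
  · have hdet : δ 0 0 * (1 : SL(2, ℤ)) 1 0 - δ 1 0 * (1 : SL(2, ℤ)) 0 0 = -q := by simp [hδ1]
    have hlen := lambdaLength_smul_infty_smul_infty (hdet ▸ neg_ne_zero.mpr hq.ne')
    rwa [hdet, map_one, one_smul, hδ, Int.cast_neg, abs_neg, abs_of_pos hqR] at hlen

end LambdaLength

theorem barycenter_on_line_general (p : ℕ) (hp : 0 < p) (k : ℤ) (hk : IsCoprime k (p : ℤ))
    (g : SL(2, ℤ)) (hre : (g • omegaH).re = (k : ℝ) / (2 * (p : ℝ))) :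
    (∀ z : ℍ, IsBarycenter ∞ ((((k : ℝ) - 1) / (2 * (p : ℝ)) : ℝ) : OnePoint ℝ)
        ((((k : ℝ) + 1) / (2 * (p : ℝ)) : ℝ) : OnePoint ℝ) z ↔
          (z : ℂ) = ((k : ℂ) + Real.sqrt 3 * Complex.I) / (2 * (p : ℂ))) ∧
    IsEquilateral ∞ ((((k : ℝ) - 1) / (2 * (p : ℝ)) : ℝ) : OnePoint ℝ)
        ((((k : ℝ) + 1) / (2 * (p : ℝ)) : ℝ) : OnePoint ℝ) (p : ℝ) ∧
    (((p : ℤ) ∣ k ^ 2 + 3 ∧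
        ((g • omegaH : ℍ) : ℂ) = ((k : ℂ) + Real.sqrt 3 * Complex.I) / (2 * (p : ℂ))) ∨
      ((p : ℤ) ∣ 3 * k ^ 2 + 1 ∧
        ((g • omegaH : ℍ) : ℂ) = (3 * (k : ℂ) + Real.sqrt 3 * Complex.I) / (6 * (p : ℂ)))) ∧
    ∃ c d : ℤ, 0 < c ∧ 0 < d ∧ IsCoprime c d ∧ c ^ 2 - c * d + d ^ 2 = (p : ℤ) := by
  have hpR : (0 : ℝ) < p := by exact_mod_cast hp
  have hrow := eisensteinNorm_eq_or_of_smul_omegaH_re_eq (Int.natCast_pos.mpr hp) hk g hre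
  refine ⟨fun z => ?_, ?_, ?_, ?_⟩
  · exact_mod_cast
      isBarycenter_infty_sub_one_div_add_one_div_iff (k : ℝ) (mul_pos two_pos hpR) z
  · obtain ⟨r, rfl, hr⟩ := exists_eq_two_mul_add_one_and_isCoprime (hrow.imp And.left And.left)
    have hleft : (((2 * r + 1 : ℤ) : ℝ) - 1) / (2 * p) = r / p := by push_cast; ring
    have hright : (((2 * r + 1 : ℤ) : ℝ) + 1) / (2 * p) = (r + 1) / p := by push_cast; ring
    rw [hleft, hright]
    exact isEquilateral_infty_coe_coe (Int.natCast_pos.mpr hp) hr.of_mul_left_left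
      hr.of_mul_left_right
  · exact dvd_and_smul_omegaH_eq_or (Int.natCast_pos.mpr hp) hk g hre
  · obtain ⟨x, y, hxy, hN⟩ : ∃ x y : ℤ, IsCoprime x y ∧ eisensteinNorm x y = p := by
      have hcop := ModularGroup.bottom_row_coprime g
      rcases hrow with ⟨-, hN⟩ | ⟨-, hN⟩
      · exact ⟨_, _, hcop, hN⟩
      · exact exists_isCoprime_eisensteinNorm_eq_of_eq_three_mul hcop hN
    rw [← hN]
    exact exists_pos_isCoprime_eisensteinNorm_eq hxy

theorem barycenter_on_line (p : ℕ) (hp : p.Prime) (hp2 : 2 < p) (k : ℤ)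
    (hk : IsCoprime k (2 * (p : ℤ))) (g : SL(2, ℤ))
    (hre : (g • omegaH).re = (k : ℝ) / (2 * (p : ℝ))) :
    -- the ideal triangle has exactly one barycenter, `(k + √3 i) / (2p)`
    (∀ z : ℍ, IsBarycenter ∞ ((((k : ℝ) - 1) / (2 * (p : ℝ)) : ℝ) : OnePoint ℝ)
        ((((k : ℝ) + 1) / (2 * (p : ℝ)) : ℝ) : OnePoint ℝ) z ↔
          (z : ℂ) = ((k : ℂ) + Real.sqrt 3 * Complex.I) / (2 * (p : ℂ))) ∧
    -- it is equilateral with sides of `λ`-length `p`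
    IsEquilateral ∞ ((((k : ℝ) - 1) / (2 * (p : ℝ)) : ℝ) : OnePoint ℝ)
        ((((k : ℝ) + 1) / (2 * (p : ℝ)) : ℝ) : OnePoint ℝ) (p : ℝ) ∧
    -- the position of the orbit point on the line
    (((p : ℤ) ∣ k ^ 2 + 3 ∧
        ((g • omegaH : ℍ) : ℂ) = ((k : ℂ) + Real.sqrt 3 * Complex.I) / (2 * (p : ℂ))) ∨
      ((p : ℤ) ∣ 3 * k ^ 2 + 1 ∧
        ((g • omegaH : ℍ) : ℂ) = (3 * (k : ℂ) + Real.sqrt 3 * Complex.I) / (6 * (p : ℂ)))) ∧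
    -- `p` is the norm of a primitive Eisenstein integer
    ∃ c d : ℤ, 0 < c ∧ 0 < d ∧ IsCoprime c d ∧ c ^ 2 - c * d + d ^ 2 = (p : ℤ) := by
  exact barycenter_on_line_general p hp.pos k hk.of_mul_right_right g hre
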